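/- The sextic curve 64b(1+16b^2) y^3 + ((768b^2+16)x^2 - 768x b^2 + 288b^2) y^2 + (264x^2 b - 108b^3 + 192x^4 b - 72xb - 384x^3 b) y + (48x^4 - 27b^2 + 54xb^2 - 16x^3 - 27x^2 b^2 - 48x^5 + 16x^6) = 0 with b = 1/2 locally defines smooth solutions y(x) of the ODE E[y] = 0 wherever the implicit function theorem applies. -/

import Mathlib

noncomputable def Eode (y : ℝ → ℝ) (s : Set ℝ) (x : ℝ) : ℝ :=
  10 * (iteratedDerivWithin 3 y s x) ^ 3 * iteratedDerivWithin 7 y s x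
  - 70 * (iteratedDerivWithin 3 y s x) ^ 2 * iteratedDerivWithin 4 y s x *
      iteratedDerivWithin 6 y s x
  - 49 * (iteratedDerivWithin 3 y s x) ^ 2 * (iteratedDerivWithin 5 y s x) ^ 2
  + 280 * iteratedDerivWithin 3 y s x * (iteratedDerivWithin 4 y s x) ^ 2 *
      iteratedDerivWithin 5 y s x
  - 175 * (iteratedDerivWithin 4 y s x) ^ 4

/-- The sextic curve (with parameter b). -/
def Fsextic (b x y : ℝ) : ℝ :=
  (64 * b + 1024 * b ^ 3) * y ^ 3
  + ((768 * b ^ 2 + 16) * x ^ 2 - 768 * x * b ^ 2 + 288 * b ^ 2) * y ^ 2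
  + (264 * x ^ 2 * b - 108 * b ^ 3 + 192 * x ^ 4 * b - 72 * x * b - 384 * x ^ 3 * b) * y
  + (48 * x ^ 4 - 27 * b ^ 2 + 54 * x * b ^ 2 - 16 * x ^ 3 - 27 * x ^ 2 * b ^ 2
      - 48 * x ^ 5 + 16 * x ^ 6)

def ev : List ℝ → ℝ → ℝ
  | [], _ => 0
  | c :: l, t => c + t * ev l t

def dev : List ℝ → ℝ → ℝ
  | [], _ => 0
  | _ :: l, t => ev l t + t * dev l t

theorem ev_hasDerivAt (l : List ℝ) (t : ℝ) : HasDerivAt (ev l) (dev l t) t := by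
  induction l with
  | nil => exact hasDerivAt_const t 0
  | cons c l ih =>
    have h := ((hasDerivAt_id t).mul ih).const_add c
    simp only [id, one_mul] at h
    exact h

def lA : List ℝ := [0, 81, -36, 4]
def lB : List ℝ := [-27, 36, -12, 16]
def lW : List ℝ := [-2187, 1944, -648, -2304, 528]
noncomputable def l0 : List ℝ := [2187/10, -5103/5, -2673/2, 864, 324, -1008/5, -296/5]
noncomputable def l1 : List ℝ := [-27/5, -297/5, 36/5, 44/5]
noncomputable def l2 : List ℝ := [8991/5, -2592/5, -4536/5, 12672/5, -1104/5]
def l3 : List ℝ := [-3240]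
def l4 : List ℝ := [510183360, -566870400, 3401222400, -2855347200, 783820800, 276203520]
def l5 : List ℝ := [-100419390748800, 595077871104000, -2702645331264000, 4319824545792000, -7765398885888000, 9270480612556800, -5995946944512000, 1491821494272000, 157453922304000, -118674948096000, -48781423411200]
def l6 : List ℝ := [45680379174066124800, -459732021174896256000, 2013320415449581056000, -5922832068979342848000, 15459508970918940672000, -26456129570161900339200, 35915558342513319936000, -40206403036780978176000, 33303718720631144448000, -17879008316740042752000, 5257836819357342105600, -362890651835695104000, -69105908293042176000, -81175243390451712000, 35184046881374208000, 11736040117528166400]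
def l7 : List ℝ := [-30743223731489023158297600, 330294652163329137693696000, -1852064801290792012409856000, 7900613014082228832043008000, -24474780152759543886784512000, 56922213779438047494812467200, -112574158969130038686449664000, 180741478625062033924030464000, -234159566095717484994035712000, 251284339288103991614373888000, -221152678005519442118600294400, 151539492693579537152212992000, -75684711783062786326659072000, 25356429331031603917357056000, -5184699947815902331797504000, 836293153793904877554892800, -358664401338921010593792000, 90941484583214647345152000, 22049819591616730497024000, -11885623537542056902656000, -3670454422794265008537600]

/-- The algebraic part: from the curve equation to the parametrization. -/
theorem param_alg (x v : ℝ) (hF : Fsextic (1/2) x v = 0)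
    (hp : (4 * x - 1) * (x ^ 4 - x ^ 3 + 9 / 2 * x ^ 2 - 27 / 4 * x) ≠ 0) :
    v - (-3/8 + 7/10 * x - 8/15 * x ^ 2 + 2/15 * x ^ 3) ≠ 0 ∧
    ∀ t, t = x + 2/15 * (x ^ 4 - x ^ 3 + 9 / 2 * x ^ 2 - 27 / 4 * x) /
        (v - (-3/8 + 7/10 * x - 8/15 * x ^ 2 + 2/15 * x ^ 3)) →
      ev lB t ≠ 0 ∧ x * ev lB t = ev lA t ∧ v = ev l0 t / ev lB t ^ 2 := by
  obtain ⟨q, hq⟩ : ∃ q, q = x ^ 4 - x ^ 3 + 9 / 2 * x ^ 2 - 27 / 4 * x := ⟨_, rfl⟩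
  obtain ⟨w, hw⟩ : ∃ w, w = v - (-3/8 + 7/10 * x - 8/15 * x ^ 2 + 2/15 * x ^ 3) := ⟨_, rfl⟩
  rw [← hq] at hp
  rw [← hq, ← hw]
  have hq0 : q ≠ 0 := right_ne_zero_of_mul hp
  have hx0 : 4 * x - 1 ≠ 0 := left_ne_zero_of_mul hp
  have hv : v = w + (-3/8 + 7/10 * x - 8/15 * x ^ 2 + 2/15 * x ^ 3) := by rw [hw]; ring
  have hF2 : 160 * w ^ 3 + (480 * (-3/8 + 7/10 * x - 8/15 * x ^ 2 + 2/15 * x ^ 3)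
      + (208 * x ^ 2 - 192 * x + 72)) * w ^ 2
      + q * (32/5 - 64/15 * x + 128/15 * x ^ 2) * w + 64/675 * (4 * x - 1) * q ^ 2 = 0 := by
    rw [hv] at hF
    unfold Fsextic at hF
    rw [hq]
    linear_combination hF
  have hw0 : w ≠ 0 := by
    intro h
    rw [h] at hF2
    have h2 : (4 * x - 1) * q ^ 2 = 0 := by linear_combination 675 / 64 * hF2
    exact (mul_ne_zero hx0 (pow_ne_zero 2 hq0)) h2
  refine ⟨hw0, ?_⟩
  intro t ht
  obtain ⟨s, hs⟩ : ∃ s, s = t - x := ⟨_, rfl⟩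
  have hts : t = x + s := by rw [hs]; ring
  have hws : w * s = 2/15 * q := by
    rw [hs, ht]; field_simp; ring
  have hs0 : s ≠ 0 := by
    intro h
    rw [h, mul_zero] at hws
    apply hq0
    linarith
  have hbr : x * ev lB t = ev lA t := by
    have h1 : q ^ 2 * (x * ev lB t - ev lA t) = 0 := by
      have h3 : x * ev lB t - ev lA t = (675/16) * (160 * (2/15) ^ 3 * q +
         (480 * (-3/8 + 7/10 * x - 8/15 * x ^ 2 + 2/15 * x ^ 3)
      + (208 * x ^ 2 - 192 * x + 72)) * (2/15) ^ 2 * s + (32/5 - 64/15 * x + 128/15 * x ^ 2) * (2/15) * s ^ 2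
      + 64/675 * (4 * x - 1) * s ^ 3) := by
        rw [hts, hq]
        simp only [lA, lB, ev]
        ring
      have h4 : 160 * (w * s) ^ 3 + (480 * (-3/8 + 7/10 * x - 8/15 * x ^ 2 + 2/15 * x ^ 3)
      + (208 * x ^ 2 - 192 * x + 72)) * (w * s) ^ 2 * s
      + q * (32/5 - 64/15 * x + 128/15 * x ^ 2) * (w * s) * s ^ 2
      + 64/675 * (4 * x - 1) * q ^ 2 * s ^ 3 = 0 := by
        linear_combination s ^ 3 * hF2
      rw [hws] at h4
      rw [h3]
      linear_combination 675/16 * h4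
    rcases mul_eq_zero.mp h1 with h | h
    · exact absurd h (pow_ne_zero 2 hq0)
    · linarith
  have hb0 : ev lB t ≠ 0 := by
    intro h
    have ha : ev lA t = 0 := by rw [← hbr, h, mul_zero]
    have h5 : (4 * t - 3) * (4 * t ^ 2 + 9) = 0 := by
      rw [← h]; simp only [lB, ev]; ring
    have h6 : t = 3 / 4 := by
      rcases mul_eq_zero.mp h5 with h | h
      · linarith
      · nlinarith [sq_nonneg t]
    rw [h6] at ha
    simp only [lA, ev] at ha
    norm_num at ha
  refine ⟨hb0, hbr, ?_⟩
  rw [eq_div_iff (pow_ne_zero 2 hb0)]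
  have e1 : t * ev lB t - ev lA t = s * ev lB t := by rw [← hbr, hs]; ring
  have hT : t * ev lB t - ev lA t ≠ 0 := by rw [e1]; exact mul_ne_zero hs0 hb0
  have e2 : (t * ev lB t - ev lA t) * (v * ev lB t ^ 3 - (-3/8 * ev lB t ^ 3
      + 7/10 * ev lA t * ev lB t ^ 2 - 8/15 * ev lA t ^ 2 * ev lB t + 2/15 * ev lA t ^ 3))
      = 2/15 * (ev lA t ^ 4 - ev lA t ^ 3 * ev lB t + 9 / 2 * ev lA t ^ 2 * ev lB t ^ 2
        - 27 / 4 * ev lA t * ev lB t ^ 3) := by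
    rw [e1, ← hbr, hv]
    linear_combination ev lB t ^ 4 * hws + 2/15 * ev lB t ^ 4 * hq
  have e3 : (t * ev lB t - ev lA t) * (-3/8 * ev lB t ^ 3
      + 7/10 * ev lA t * ev lB t ^ 2 - 8/15 * ev lA t ^ 2 * ev lB t + 2/15 * ev lA t ^ 3)
      + 2/15 * (ev lA t ^ 4 - ev lA t ^ 3 * ev lB t + 9 / 2 * ev lA t ^ 2 * ev lB t ^ 2
        - 27 / 4 * ev lA t * ev lB t ^ 3) = (t * ev lB t - ev lA t) * ev lB t * ev l0 t := by
    simp only [lA, lB, l0, ev]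
    ring
  apply mul_left_cancel₀ (mul_ne_zero hT hb0)
  linear_combination e2 + e3

theorem step_quot (lN lD : List ℝ) (t : ℝ → ℝ) (x τ : ℝ) (n : ℕ) (ht : HasDerivAt t τ x)
    (hD : ev lD (t x) ≠ 0) :
    HasDerivAt (fun x => ev lN (t x) / ev lD (t x) ^ n)
      ((dev lN (t x) * ev lD (t x) - n * ev lN (t x) * dev lD (t x)) / ev lD (t x) ^ (n + 1) * τ)
      x := by
  have h1 := (ev_hasDerivAt lN (t x)).comp x ht
  have h2 := ((ev_hasDerivAt lD (t x)).comp x ht).pow n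
  have h3 := h1.div h2 (by simpa using pow_ne_zero n hD)
  refine h3.congr_deriv ?_
  simp only [Function.comp, Pi.pow_apply]
  rcases n with _ | n
  · simp
    field_simp
    simp
  · simp only [Nat.add_sub_cancel]
    field_simp
    try ring

theorem step_main (l l' : List ℝ) (m n : ℕ) (t : ℝ → ℝ) (x : ℝ)
    (ht : HasDerivAt t (ev lB (t x) ^ 2 / ev lW (t x)) x)
    (hb : ev lB (t x) ≠ 0) (hW : ev lW (t x) ≠ 0)
    (hl : ev l' (t x) = (m + 1 : ℕ) * dev lB (t x) * ev l (t x) * ev lW (t x)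
      + ev lB (t x) * dev l (t x) * ev lW (t x)
      - n * ev lB (t x) * ev l (t x) * dev lW (t x)) :
    HasDerivAt (fun x => ev lB (t x) ^ (m + 1) * (ev l (t x) / ev lW (t x) ^ n))
      (ev lB (t x) ^ (m + 2) * (ev l' (t x) / ev lW (t x) ^ (n + 2))) x := by
  have h1 := step_quot l lW t x _ n ht hW
  have h2 := ((ev_hasDerivAt lB (t x)).comp x ht).pow (m + 1)
  refine (h2.mul h1).congr_deriv ?_
  simp only [Function.comp, Pi.pow_apply, Nat.add_sub_cancel]
  rw [hl]
  field_simp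
  push_cast
  ring

theorem iter_step (y : ℝ → ℝ) (s U : Set ℝ) (hs : IsOpen s) (hU : IsOpen U) (hUs : U ⊆ s) (n : ℕ)
    (f f' : ℝ → ℝ) (h : ∀ x ∈ U, iteratedDerivWithin n y s x = f x)
    (hf : ∀ x ∈ U, HasDerivAt f (f' x) x) :
    ∀ x ∈ U, iteratedDerivWithin (n + 1) y s x = f' x := by
  intro x hx
  rw [iteratedDerivWithin_succ, derivWithin_of_isOpen hs (hUs hx)]
  have : iteratedDerivWithin n y s =ᶠ[nhds x] f := by
    filter_upwards [hU.mem_nhds hx] with z hz using h z hz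
  rw [this.deriv_eq]
  exact (hf x hx).deriv

theorem ode_on (s U : Set ℝ) (hs : IsOpen s) (hU : IsOpen U) (hUs : U ⊆ s) (y t : ℝ → ℝ)
    (hb : ∀ x ∈ U, ev lB (t x) ≠ 0)
    (hW : ∀ x ∈ U, ev lW (t x) ≠ 0)
    (ht : ∀ x ∈ U, HasDerivAt t (ev lB (t x) ^ 2 / ev lW (t x)) x)
    (hy : ∀ x ∈ U, y x = ev l0 (t x) / ev lB (t x) ^ 2) :
    ∀ x ∈ U, Eode y s x = 0 := by
  have d1 := iter_step y s U hs hU hUs 0 _ (fun x => ev l1 (t x) / ev lB (t x) ^ 1)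
    (by simpa using hy) (by
      intro x hx
      refine (step_quot l0 lB t x _ 2 (ht x hx) (hb x hx)).congr_deriv ?_
      have h1 := hb x hx
      have h2 := hW x hx
      have key : dev l0 (t x) * ev lB (t x) - 2 * ev l0 (t x) * dev lB (t x)
          = ev l1 (t x) * ev lW (t x) := by
        simp only [l0, l1, lB, lW, ev, dev]; ring
      push_cast
      rw [key]
      field_simp)
  have d2 := iter_step y s U hs hU hUs 1 _ (fun x => ev l2 (t x) / ev lW (t x) ^ 1)
    d1 (by
      intro x hx
      refine (step_quot l1 lB t x _ 1 (ht x hx) (hb x hx)).congr_deriv ?_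
      have h1 := hb x hx
      have h2 := hW x hx
      have key : dev l1 (t x) * ev lB (t x) - 1 * ev l1 (t x) * dev lB (t x)
          = ev l2 (t x) := by
        simp only [l1, l2, lB, ev, dev]; ring
      push_cast
      rw [key]
      field_simp)
  have d3 := iter_step y s U hs hU hUs 2 _
    (fun x => ev lB (t x) ^ (3 + 1) * (ev l3 (t x) / ev lW (t x) ^ 3))
    d2 (by
      intro x hx
      refine (step_quot l2 lW t x _ 1 (ht x hx) (hW x hx)).congr_deriv ?_
      have h1 := hb x hx
      have h2 := hW x hx
      have key : dev l2 (t x) * ev lW (t x) - 1 * ev l2 (t x) * dev lW (t x)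
          = ev lB (t x) ^ 2 * ev l3 (t x) := by
        simp only [l2, l3, lB, lW, ev, dev]; ring
      push_cast
      rw [key]
      field_simp)
  have d4 := iter_step y s U hs hU hUs 3 _
    (fun x => ev lB (t x) ^ (4 + 1) * (ev l4 (t x) / ev lW (t x) ^ 5))
    d3 (fun x hx => step_main l3 l4 3 3 t x (ht x hx) (hb x hx) (hW x hx) (by
      simp only [l3, l4, lB, lW, ev, dev]; push_cast; ring))
  have d5 := iter_step y s U hs hU hUs 4 _
    (fun x => ev lB (t x) ^ (5 + 1) * (ev l5 (t x) / ev lW (t x) ^ 7))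
    d4 (fun x hx => step_main l4 l5 4 5 t x (ht x hx) (hb x hx) (hW x hx) (by
      simp only [l4, l5, lB, lW, ev, dev]; push_cast; ring))
  have d6 := iter_step y s U hs hU hUs 5 _
    (fun x => ev lB (t x) ^ (6 + 1) * (ev l6 (t x) / ev lW (t x) ^ 9))
    d5 (fun x hx => step_main l5 l6 5 7 t x (ht x hx) (hb x hx) (hW x hx) (by
      simp only [l5, l6, lB, lW, ev, dev]; push_cast; ring))
  have d7 := iter_step y s U hs hU hUs 6 _
    (fun x => ev lB (t x) ^ (7 + 1) * (ev l7 (t x) / ev lW (t x) ^ 11))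
    d6 (fun x hx => step_main l6 l7 6 9 t x (ht x hx) (hb x hx) (hW x hx) (by
      simp only [l6, l7, lB, lW, ev, dev]; push_cast; ring))
  intro x hx
  have h2 := hW x hx
  have key : 10 * ev l3 (t x) ^ 3 * ev l7 (t x)
      - 70 * ev l3 (t x) ^ 2 * ev l4 (t x) * ev l6 (t x)
      - 49 * ev l3 (t x) ^ 2 * ev l5 (t x) ^ 2
      + 280 * ev l3 (t x) * ev l4 (t x) ^ 2 * ev l5 (t x) - 175 * ev l4 (t x) ^ 4 = 0 := by
    simp only [l3, l4, l5, l6, l7, ev]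
    ring
  have e3 := d3 x hx
  have e4 := d4 x hx
  have e5 := d5 x hx
  have e6 := d6 x hx
  have e7 := d7 x hx
  norm_num only at e3 e4 e5 e6 e7
  unfold Eode
  rw [e3, e4, e5, e6, e7]
  generalize ev lB (t x) = B at *
  generalize ev lW (t x) = W at *
  have : ∀ p3 p4 p5 p6 p7 : ℝ, 10 * (B ^ 4 * (p3 / W ^ 3)) ^ 3 * (B ^ 8 * (p7 / W ^ 11))
      - 70 * (B ^ 4 * (p3 / W ^ 3)) ^ 2 * (B ^ 5 * (p4 / W ^ 5)) * (B ^ 7 * (p6 / W ^ 9))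
      - 49 * (B ^ 4 * (p3 / W ^ 3)) ^ 2 * (B ^ 6 * (p5 / W ^ 7)) ^ 2
      + 280 * (B ^ 4 * (p3 / W ^ 3)) * (B ^ 5 * (p4 / W ^ 5)) ^ 2 * (B ^ 6 * (p5 / W ^ 7))
      - 175 * (B ^ 5 * (p4 / W ^ 5)) ^ 4 = B ^ 20 / W ^ 20 *
      (10 * p3 ^ 3 * p7 - 70 * p3 ^ 2 * p4 * p6 - 49 * p3 ^ 2 * p5 ^ 2 + 280 * p3 * p4 ^ 2 * p5
       - 175 * p4 ^ 4) := by
    intro p3 p4 p5 p6 p7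
    field_simp
  rw [this, key, mul_zero]

theorem stmt17 (a c : ℝ) (hac : a < c) (y : ℝ → ℝ)
    (hy : ContDiffOn ℝ (⊤ : ℕ∞) y (Set.Ioo a c))
    (hcurve : ∀ x ∈ Set.Ioo a c, Fsextic (1/2) x (y x) = 0)
    (hFy : ∀ x ∈ Set.Ioo a c, deriv (fun w => Fsextic (1/2) x w) (y x) ≠ 0) :
    ∀ x ∈ Set.Ioo a c, Eode y (Set.Ioo a c) x = 0 := by
  have hso : IsOpen (Set.Ioo a c) := isOpen_Ioo
  obtain ⟨p, hp⟩ : ∃ p : ℝ → ℝ, p = fun x : ℝ => (4 * x - 1) *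
    (x ^ 4 - x ^ 3 + 9 / 2 * x ^ 2 - 27 / 4 * x) := ⟨_, rfl⟩
  have hpc : Continuous p := by rw [hp]; fun_prop
  -- the bad set is finite
  have hfin : {x | p x = 0}.Finite := by
    let P : Polynomial ℝ := (4 * Polynomial.X - 1) * (Polynomial.X ^ 4 - Polynomial.X ^ 3
      + Polynomial.C (9 / 2) * Polynomial.X ^ 2 - Polynomial.C (27 / 4) * Polynomial.X)
    have hev : ∀ x, P.eval x = p x := by
      intro x
      simp [P, hp]
    have hP0 : P ≠ 0 := by
      intro h
      have h2 := hev 1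
      rw [h, hp] at h2
      norm_num at h2
    refine (Polynomial.finite_setOfPred_isRoot hP0).subset ?_
    intro x hx
    show P.eval x = 0
    rw [hev]; exact hx
  have hU : IsOpen (Set.Ioo a c ∩ {x | p x ≠ 0}) :=
    hso.inter (isOpen_ne_fun hpc continuous_const)
  have hyd : ∀ x ∈ Set.Ioo a c, DifferentiableAt ℝ y x := fun x hx =>
    (hy.contDiffAt (hso.mem_nhds hx)).differentiableAt (by simp)
  obtain ⟨t, ht⟩ : ∃ t : ℝ → ℝ, t = fun x => x + 2/15 * (x ^ 4 - x ^ 3 + 9 / 2 * x ^ 2 - 27 / 4 * x) /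
        (y x - (-3/8 + 7/10 * x - 8/15 * x ^ 2 + 2/15 * x ^ 3)) := ⟨_, rfl⟩
  have halg : ∀ x ∈ Set.Ioo a c ∩ {x | p x ≠ 0},
      ev lB (t x) ≠ 0 ∧ x * ev lB (t x) = ev lA (t x) ∧ y x = ev l0 (t x) / ev lB (t x) ^ 2 := by
    intro x hx
    have h1 := hx.2
    simp only [hp, Set.mem_ofPred_eq] at h1
    exact (param_alg x (y x) (hcurve x hx.1) h1).2 (t x) (by rw [ht])
  have htd : ∀ x ∈ Set.Ioo a c ∩ {x | p x ≠ 0}, DifferentiableAt ℝ t x := by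
    intro x hx
    have h1 := hx.2
    simp only [hp, Set.mem_ofPred_eq] at h1
    have h2 := (param_alg x (y x) (hcurve x hx.1) h1).1
    have h3 := hyd x hx.1
    rw [ht]
    fun_prop (disch := exact h2)
  have hder : ∀ x ∈ Set.Ioo a c ∩ {x | p x ≠ 0},
      ev lB (t x) ^ 2 = deriv t x * ev lW (t x) := by
    intro x hx
    have h1 := (htd x hx).hasDerivAt
    have hB := (ev_hasDerivAt lB (t x)).comp x h1
    have hA := (ev_hasDerivAt lA (t x)).comp x h1
    have h2 := (hasDerivAt_id x).mul hB
    have h3 : (id * (ev lB ∘ t)) =ᶠ[nhds x] (ev lA ∘ t) := by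
      filter_upwards [hU.mem_nhds hx] with z hz
      exact (halg z hz).2.1
    have h4 := (h2.congr_of_eventuallyEq h3.symm).unique hA
    simp only [id, Function.comp, one_mul] at h4
    have h5 := (halg x hx).2.1
    have h6 : ev lW (t x) = dev lA (t x) * ev lB (t x) - ev lA (t x) * dev lB (t x) := by
      simp only [lA, lB, lW, ev, dev]; ring
    rw [h6, ← h5]
    linear_combination ev lB (t x) * h4
  have hW : ∀ x ∈ Set.Ioo a c ∩ {x | p x ≠ 0}, ev lW (t x) ≠ 0 := by
    intro x hx h
    have h1 := hder x hx
    rw [h, mul_zero] at h1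
    exact pow_ne_zero 2 (halg x hx).1 h1
  have hgood := ode_on (Set.Ioo a c) _ hso hU Set.inter_subset_left y t
    (fun x hx => (halg x hx).1) hW (fun x hx => by
      have h1 := (htd x hx).hasDerivAt
      refine h1.congr_deriv ?_
      rw [eq_div_iff (hW x hx), hder x hx]) (fun x hx => (halg x hx).2.2)
  -- continuity and density
  have hcont : ContinuousOn (Eode y (Set.Ioo a c)) (Set.Ioo a c) := by
    have hk : ∀ k : ℕ, ContinuousOn (iteratedDerivWithin k y (Set.Ioo a c)) (Set.Ioo a c) :=
      fun k => hy.continuousOn_iteratedDerivWithin (by exact_mod_cast le_top) hso.uniqueDiffOn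
    have := hk 3
    have := hk 4
    have := hk 5
    have := hk 6
    have := hk 7
    unfold Eode
    fun_prop
  intro x hx
  by_contra hne
  have h1 : ∀ᶠ z in nhds x, Eode y (Set.Ioo a c) z ≠ 0 :=
    (hcont.continuousAt (hso.mem_nhds hx)).eventually_ne hne
  have hdense : Dense {x | p x = 0}ᶜ := hfin.countable.dense_compl ℝ
  obtain ⟨z, hz, hz2⟩ := hdense.inter_nhds_nonempty (h1.and (hso.mem_nhds hx))
  exact hz2.1 (hgood z ⟨hz2.2, hz⟩)
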